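/- Let h = a·r₁ + b·r₂ where r₁ is the rank function of the wheel matroid W^{12}_2 and r₂ that of U^{134}_{2,3} on N_4, with a, b ≥ 0. Then h is entropic if and only if there exist a positive integer k and a partition (α₁,...,α_t) of k into positive integers such that a + b = log k and a = H(α₁/k, ..., α_t/k). -/

import Mathlib

open Finset

/-- Probability that the discrete random variable `Y` (on finite sample space `Ω`
with pmf `p`) takes the value `s`. -/
noncomputable def pr {Ω : Type} [Fintype Ω] {S : Type} [DecidableEq S]
    (p : Ω → ℝ) (Y : Ω → S) (s : S) : ℝ := ∑ ω, if Y ω = s then p ω else 0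

/-- Shannon entropy (base 2) of the discrete random variable `Y`. -/
noncomputable def ent {Ω : Type} [Fintype Ω] {S : Type} [DecidableEq S]
    (p : Ω → ℝ) (Y : Ω → S) : ℝ :=
  - ∑ s ∈ Finset.univ.image Y, pr p Y s * Real.logb 2 (pr p Y s)

/-- `h : 2^{N_n} → ℝ` is entropic: it is the entropy function of some random
vector `(X_1, …, X_n)` on finite alphabets. -/
def IsEntropic (n : ℕ) (h : Finset (Fin n) → ℝ) : Prop :=
  ∃ (m : Fin n → ℕ) (p : (∀ i, Fin (m i)) → ℝ),
    (∀ x, 0 ≤ p x) ∧ (∑ x, p x) = 1 ∧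
    ∀ A : Finset (Fin n), h A = ent p (fun x (i : A) => x i.1)

/-- Rank function of the matroid U^{B}_{k,|B|} on N₄ = {0,1,2,3}:
A ↦ min(k, |A ∩ B|); elements outside B are loops. -/
noncomputable def rkU (k : ℕ) (B : Finset (Fin 4)) (A : Finset (Fin 4)) : ℝ :=
  min (k : ℝ) ((A ∩ B).card : ℝ)

/-- Rank function of the rank-2 wheel matroid W^{12}₂ on N₄ = {0,1,2,3} in which
0 and 1 are parallel: r(A) = min(2, number of parallel classes {0,1},{2},{3}
meeting A). -/
noncomputable def rW12 (A : Finset (Fin 4)) : ℝ :=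
  min (2 : ℝ)
    (((if (A ∩ ({0,1} : Finset (Fin 4))).Nonempty then 1 else 0) +
      (if (2 : Fin 4) ∈ A then 1 else 0) +
      (if (3 : Fin 4) ∈ A then 1 else 0) : ℝ))

/-!
If `h` is entropic, then `X₀, X₂, X₃` are pairwise independent and each is determined by the other
two. On the support `P(x₀) P(x₃) = P(x₀, x₂, x₃) = P(x₂) P(x₃)`, so `P(x₀) = P(x₂)`; as `X₀` and
`X₂` are independent, every pair of values occurs and `X₀` is uniform, say on `k` values. Since `X₁`
is a function of `X₀`, its probabilities are `αᵢ / k` with `αᵢ` the sizes of the fibres of that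
function. Conversely, let `x` and `y` be independent and uniform on a group of order `k` and let `f`
have fibres of sizes `αᵢ`: the vector `(x, f x, y, x - y)` has entropy function `h`.
-/

lemma eq_of_sum_mul_logb_eq {ι : Type*} [Fintype ι] {b : ℝ} (hb : 1 < b) {P Q : ι → ℝ}
    (hP : ∀ i, 0 ≤ P i) (hQ : ∀ i, 0 ≤ Q i) (hPQ : ∀ i, Q i = 0 → P i = 0)
    (hsum : ∑ i, P i = ∑ i, Q i)
    (hlog : ∑ i, P i * Real.logb b (P i) = ∑ i, P i * Real.logb b (Q i)) : P = Q := by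
  have klFun_eq (i : ι) : Q i * InformationTheory.klFun (P i / Q i) =
      Real.log b * (P i * Real.logb b (P i) - P i * Real.logb b (Q i)) + (Q i - P i) := by
    have hlogb : Real.log b ≠ 0 := (Real.log_pos hb).ne'
    rcases eq_or_ne (P i) 0 with hPi | hPi
    · simp [hPi, InformationTheory.klFun]
    · have hQi : Q i ≠ 0 := mt (hPQ i) hPi
      rw [InformationTheory.klFun_apply, Real.log_div hPi hQi, Real.logb, Real.logb]
      field_simp
      ring
  have klFun_nonneg (i : ι) : 0 ≤ Q i * InformationTheory.klFun (P i / Q i) :=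
    mul_nonneg (hQ i) (InformationTheory.klFun_nonneg (div_nonneg (hP i) (hQ i)))
  have sum_klFun : ∑ i, Q i * InformationTheory.klFun (P i / Q i) = 0 := by
    simp only [klFun_eq, sum_add_distrib, ← mul_sum, sum_sub_distrib, hlog, hsum, sub_self,
      mul_zero, add_zero]
  funext i
  have hi := (sum_eq_zero_iff_of_nonneg fun i _ => klFun_nonneg i).1 sum_klFun i (mem_univ i)
  rcases mul_eq_zero.1 hi with hQi | hkl
  · rw [hPQ i hQi, hQi]
  · rw [InformationTheory.klFun_eq_zero_iff (div_nonneg (hP i) (hQ i))] at hkl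
    exact eq_of_div_eq_one hkl

lemma exists_fin_pos_sum_eq {ι M : Type*} [Fintype ι] [AddCommMonoid M] (α : ι → ℕ) :
    ∃ (t : ℕ) (β : Fin t → ℕ), (∀ i, 0 < β i) ∧
      ∀ F : ℕ → M, F 0 = 0 → ∑ i, F (β i) = ∑ j, F (α j) := by
  let e := (univ.filter fun j => 0 < α j).equivFin
  refine ⟨_, fun i => α (e.symm i), fun i => (mem_filter.1 (e.symm i).2).2, fun F hF => ?_⟩
  rw [e.symm.sum_comp fun j => F (α j), sum_coe_sort _ fun j => F (α j)]
  refine sum_filter_of_ne fun j _ hj => Nat.pos_of_ne_zero fun h0 => hj ?_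
  rw [h0, hF]

lemma exists_card_fiber_eq {t : ℕ} (α : Fin t → ℕ) :
    ∃ f : Fin (∑ i, α i) → Fin t, ∀ j, #{x | f x = j} = α j := by
  refine ⟨fun x => (finSigmaFinEquiv.symm x).1, fun j => ?_⟩
  rw [← Fintype.card_subtype, ← Fintype.card_fin (α j)]
  exact Fintype.card_congr
    ((finSigmaFinEquiv.symm.subtypeEquiv fun _ => Iff.rfl).trans (Equiv.sigmaSubtype j))

section Probability

variable {Ω Ω' S T U : Type} [Fintype Ω] [Fintype Ω'] [DecidableEq S] [DecidableEq T]
  [DecidableEq U] {p : Ω → ℝ} {q : Ω' → ℝ}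

lemma pr_nonneg (hp : ∀ ω, 0 ≤ p ω) (X : Ω → S) (s : S) : 0 ≤ pr p X s :=
  sum_nonneg fun ω _ => ite_nonneg (hp ω) le_rfl

lemma pr_mono (hp : ∀ ω, 0 ≤ p ω) {X : Ω → S} {Y : Ω → T} {s : S} {t : T}
    (h : ∀ ω, X ω = s → Y ω = t) : pr p X s ≤ pr p Y t := by
  refine sum_le_sum fun ω _ => ?_
  by_cases hX : X ω = s
  · rw [if_pos hX, if_pos (h ω hX)]
  · rw [if_neg hX]
    exact ite_nonneg (hp ω) le_rfl

lemma pr_pos (hp : ∀ ω, 0 ≤ p ω) (X : Ω → S) {ω : Ω} (hω : 0 < p ω) : 0 < pr p X (X ω) :=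
  sum_pos' (fun ω _ => ite_nonneg (hp ω) le_rfl) ⟨ω, mem_univ ω, by rwa [if_pos rfl]⟩

lemma exists_pos_of_pr_pos {X : Ω → S} {s : S} (h : 0 < pr p X s) : ∃ ω, 0 < p ω ∧ X ω = s := by
  obtain ⟨ω, -, hω⟩ := exists_lt_of_sum_lt (f := fun _ => (0 : ℝ)) (by simpa [pr] using h)
  split_ifs at hω with hX
  · exact ⟨ω, hω, hX⟩
  · exact absurd hω (lt_irrefl 0)

lemma sum_pr_mul [Fintype S] (p : Ω → ℝ) (X : Ω → S) (F : S → ℝ) :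
    ∑ s, pr p X s * F s = ∑ ω, p ω * F (X ω) := by
  simp only [pr, sum_mul, ite_mul, zero_mul]
  rw [sum_comm]
  simp only [sum_ite_eq, mem_univ, if_true]

lemma sum_pr [Fintype S] (p : Ω → ℝ) (X : Ω → S) : ∑ s, pr p X s = ∑ ω, p ω := by
  simpa only [mul_one] using sum_pr_mul p X fun _ => 1

lemma sum_pr_prodMk [Fintype S] (p : Ω → ℝ) (X : Ω → S) (Y : Ω → T) (t : T) :
    ∑ s, pr p (fun ω => (X ω, Y ω)) (s, t) = pr p Y t := by
  simp only [pr, Prod.mk.injEq, ite_and]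
  rw [sum_comm]
  simp only [sum_ite_eq, mem_univ, if_true]

lemma pr_pr [Fintype S] (p : Ω → ℝ) (X : Ω → S) (Y : S → T) (t : T) :
    pr (pr p X) Y t = pr p (fun ω => Y (X ω)) t := by
  simpa only [mul_ite, mul_one, mul_zero] using! sum_pr_mul p X fun s => if Y s = t then 1 else 0

lemma pr_prod (p : Ω → ℝ) (q : Ω' → ℝ) (X : Ω → S) (Y : Ω' → T) (s : S) (t : T) :
    pr (fun z : Ω × Ω' => p z.1 * q z.2) (fun z => (X z.1, Y z.2)) (s, t) =
      pr p X s * pr q Y t := by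
  simp only [pr, Fintype.sum_mul_sum, Fintype.sum_prod_type, Prod.mk.injEq, ite_zero_mul_ite_zero]

lemma ent_eq_neg_sum_univ [Fintype S] (p : Ω → ℝ) (X : Ω → S) :
    ent p X = -∑ s, pr p X s * Real.logb 2 (pr p X s) := by
  refine congrArg Neg.neg (sum_subset (subset_univ _) fun s _ hs => ?_)
  have hpr : pr p X s = 0 := sum_eq_zero fun ω _ =>
    if_neg fun h => hs (mem_image.2 ⟨ω, mem_univ ω, h⟩)
  rw [hpr, zero_mul]

lemma ent_eq_neg_sum (p : Ω → ℝ) (X : Ω → S) :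
    ent p X = -∑ ω, p ω * Real.logb 2 (pr p X (X ω)) := by
  rw [ent, ← sum_fiberwise_of_maps_to fun ω _ => mem_image_of_mem X (mem_univ ω)]
  refine congrArg Neg.neg (sum_congr rfl fun s _ => ?_)
  rw [pr, sum_mul, sum_filter]
  refine sum_congr rfl fun ω _ => ?_
  split_ifs with h
  · rw [h, pr]
  · rw [zero_mul]

lemma ent_congr (p : Ω → ℝ) {X : Ω → S} {Y : Ω → T} (h : ∀ ω ω', X ω = X ω' ↔ Y ω = Y ω') :
    ent p X = ent p Y := by
  simp only [ent_eq_neg_sum, pr, h]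

lemma ent_comp_of_injective {f : S → T} (hf : Function.Injective f) (p : Ω → ℝ) (X : Ω → S) :
    ent p (fun ω => f (X ω)) = ent p X :=
  ent_congr p fun _ _ => hf.eq_iff

lemma ent_pr [Fintype S] (p : Ω → ℝ) (X : Ω → S) (Y : S → T) :
    ent (pr p X) Y = ent p fun ω => Y (X ω) := by
  simp only [ent_eq_neg_sum, sum_pr_mul, pr_pr]

lemma ent_const (hp : ∑ ω, p ω = 1) (s : S) : ent p (fun _ => s) = 0 := by
  simp [ent_eq_neg_sum, pr, hp]

lemma ent_prod (hp : p ∈ stdSimplex ℝ Ω) (hq : q ∈ stdSimplex ℝ Ω') (X : Ω → S) (Y : Ω' → T) :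
    ent (fun z : Ω × Ω' => p z.1 * q z.2) (fun z => (X z.1, Y z.2)) = ent p X + ent q Y := by
  have term_eq (z : Ω × Ω') :
      p z.1 * q z.2 * Real.logb 2 (pr p X (X z.1) * pr q Y (Y z.2)) =
        p z.1 * Real.logb 2 (pr p X (X z.1)) * q z.2 +
          p z.1 * (q z.2 * Real.logb 2 (pr q Y (Y z.2))) := by
    rcases (hp.1 z.1).eq_or_lt with hpz | hpz
    · simp only [← hpz, zero_mul, add_zero]
    rcases (hq.1 z.2).eq_or_lt with hqz | hqz
    · simp only [← hqz, zero_mul, mul_zero, add_zero]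
    rw [Real.logb_mul (pr_pos hp.1 X hpz).ne' (pr_pos hq.1 Y hqz).ne']
    ring
  simp only [ent_eq_neg_sum, pr_prod, term_eq, Fintype.sum_prod_type, sum_add_distrib, ← mul_sum,
    ← sum_mul, hp.2, hq.2, one_mul, mul_one, neg_add]

lemma pr_eq_pr_of_ent_eq (hp : ∀ ω, 0 ≤ p ω) {X : Ω → S} {Y : Ω → T}
    (hXY : ∀ ω ω', X ω = X ω' → Y ω = Y ω') (hent : ent p X = ent p Y) {ω : Ω} (hω : 0 < p ω) :
    pr p X (X ω) = pr p Y (Y ω) := by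
  have term_le (ω : Ω) (_ : ω ∈ univ) :
      p ω * Real.logb 2 (pr p X (X ω)) ≤ p ω * Real.logb 2 (pr p Y (Y ω)) := by
    rcases (hp ω).eq_or_lt with h0 | hpos
    · simp only [← h0, zero_mul, le_refl]
    · exact mul_le_mul_of_nonneg_left (Real.logb_le_logb_of_le one_lt_two (pr_pos hp X hpos)
        (pr_mono hp fun ω' => hXY ω' ω)) hpos.le
  rw [ent_eq_neg_sum, ent_eq_neg_sum, neg_inj, sum_eq_sum_iff_of_le term_le] at hent
  exact Real.logb_injOn_pos one_lt_two (pr_pos hp X hω) (pr_pos hp Y hω)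
    (mul_left_cancel₀ hω.ne' (hent ω (mem_univ ω)))

lemma pr_prodMk_eq_mul_of_ent_eq_add [Finite S] [Finite T] (hp : p ∈ stdSimplex ℝ Ω) {X : Ω → S}
    {Y : Ω → T} (hent : ent p (fun ω => (X ω, Y ω)) = ent p X + ent p Y) (s : S) (t : T) :
    pr p (fun ω => (X ω, Y ω)) (s, t) = pr p X s * pr p Y t := by
  cases nonempty_fintype S
  cases nonempty_fintype T
  have log_mul (ω : Ω) : p ω * Real.logb 2 (pr p X (X ω) * pr p Y (Y ω)) =
      p ω * Real.logb 2 (pr p X (X ω)) + p ω * Real.logb 2 (pr p Y (Y ω)) := by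
    rcases (hp.1 ω).eq_or_lt with h0 | hpos
    · simp only [← h0, zero_mul, add_zero]
    · rw [Real.logb_mul (pr_pos hp.1 X hpos).ne' (pr_pos hp.1 Y hpos).ne', mul_add]
  refine congrFun (eq_of_sum_mul_logb_eq (P := pr p fun ω => (X ω, Y ω))
    (Q := fun z => pr p X z.1 * pr p Y z.2) one_lt_two (pr_nonneg hp.1 _)
    (fun z => mul_nonneg (pr_nonneg hp.1 X z.1) (pr_nonneg hp.1 Y z.2)) (fun z hz => ?_) ?_ ?_)
    (s, t)
  · refine le_antisymm ?_ (pr_nonneg hp.1 _ z)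
    rcases mul_eq_zero.1 hz with h0 | h0 <;> rw [← h0] <;> refine pr_mono hp.1 fun ω hω => ?_
    exacts [congrArg Prod.fst hω, congrArg Prod.snd hω]
  · rw [sum_pr, Fintype.sum_prod_type]
    simp only [← mul_sum, sum_pr, hp.2, mul_one]
  · simp only [sum_pr_mul, log_mul, sum_add_distrib]
    simp only [ent_eq_neg_sum] at hent
    linarith

end Probability

section Uniform

variable {Ω S T U : Type} [Fintype Ω] [DecidableEq S] [DecidableEq T] [DecidableEq U] {p : Ω → ℝ}

/-- The random variable `X` is equidistributed on its support, every value of positive probability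
having probability `1 / k`; when `p` has total mass `1`, the support then has `k` elements. -/
def IsUniform (p : Ω → ℝ) (X : Ω → S) (k : ℕ) : Prop :=
  ∀ s, 0 < pr p X s → pr p X s = (k : ℝ)⁻¹

lemma exists_pos_of_mem_stdSimplex (hp : p ∈ stdSimplex ℝ Ω) : ∃ ω, 0 < p ω := by
  obtain ⟨ω, -, hω⟩ := exists_lt_of_sum_lt (s := univ) (f := fun _ => (0 : ℝ)) (g := p)
    (by simp [hp.2])
  exact ⟨ω, hω⟩

lemma exists_isUniform_of_pr_eq [Finite S] (hp : p ∈ stdSimplex ℝ Ω) {X : Ω → S} {c : ℝ}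
    (hc : ∀ s, 0 < pr p X s → pr p X s = c) : ∃ k, IsUniform p X k := by
  cases nonempty_fintype S
  have card_mul : (#{s | 0 < pr p X s} : ℝ) * c = 1 := by
    rw [← hp.2, ← sum_pr p X, ← nsmul_eq_mul, ← sum_const, sum_filter]
    refine sum_congr rfl fun s _ => ?_
    split_ifs with hs
    · exact (hc s hs).symm
    · exact le_antisymm (pr_nonneg hp.1 X s) (not_lt.1 hs)
  exact ⟨_, fun s hs => (hc s hs).trans (eq_inv_of_mul_eq_one_right card_mul)⟩

lemma IsUniform.pos {X : Ω → S} {k : ℕ} (hX : IsUniform p X k) (hp : p ∈ stdSimplex ℝ Ω) :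
    0 < k := by
  obtain ⟨ω, hω⟩ := exists_pos_of_mem_stdSimplex hp
  have hpr := pr_pos hp.1 X hω
  rw [hX _ hpr] at hpr
  exact Nat.cast_pos.1 (inv_pos.1 hpr)

lemma IsUniform.ent_eq {X : Ω → S} {k : ℕ} (hX : IsUniform p X k) (hp : p ∈ stdSimplex ℝ Ω) :
    ent p X = Real.logb 2 k := by
  have term_eq (ω : Ω) : p ω * Real.logb 2 (pr p X (X ω)) = p ω * -Real.logb 2 k := by
    rcases (hp.1 ω).eq_or_lt with h0 | hpos
    · simp only [← h0, zero_mul]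
    · rw [hX _ (pr_pos hp.1 X hpos), Real.logb_inv]
  rw [ent_eq_neg_sum, sum_congr rfl fun ω _ => term_eq ω, ← sum_mul, hp.2, one_mul, neg_neg]

lemma IsUniform.exists_pr_eq_div [Finite S] {X : Ω → S} {k : ℕ} (hX : IsUniform p X k)
    (hp : ∀ ω, 0 ≤ p ω) {Y : Ω → T} (hent : ent p (fun ω => (X ω, Y ω)) = ent p X) :
    ∃ α : T → ℕ, ∀ t, pr p Y t = α t / k := by
  cases nonempty_fintype S
  refine ⟨fun t => #{s | 0 < pr p (fun ω => (X ω, Y ω)) (s, t)}, fun t => ?_⟩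
  rw [← sum_pr_prodMk p X Y, div_eq_mul_inv, ← nsmul_eq_mul, ← sum_const, sum_filter]
  refine sum_congr rfl fun s _ => ?_
  split_ifs with hst
  · obtain ⟨ω, hω, hval⟩ := exists_pos_of_pr_pos hst
    have hpr := pr_eq_pr_of_ent_eq hp (fun _ _ h => congrArg Prod.fst h) hent hω
    rw [← hval, hpr, hX _ (pr_pos hp X hω)]
  · exact le_antisymm (not_lt.1 hst) (pr_nonneg hp _ _)

lemma exists_isUniform_of_pairwise_indep [Finite S] [Finite T] [Finite U]
    (hp : p ∈ stdSimplex ℝ Ω) {X : Ω → S} {Y : Ω → T} {Z : Ω → U}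
    (hXY : ent p (fun ω => (X ω, Y ω)) = ent p X + ent p Y)
    (hXZ : ent p (fun ω => (X ω, Z ω)) = ent p X + ent p Z)
    (hYZ : ent p (fun ω => (Y ω, Z ω)) = ent p Y + ent p Z)
    (hY : ent p (fun ω => (X ω, Y ω, Z ω)) = ent p fun ω => (X ω, Z ω))
    (hX : ent p (fun ω => (X ω, Y ω, Z ω)) = ent p fun ω => (Y ω, Z ω)) :
    ∃ k, IsUniform p X k := by
  have pr_eq {ω : Ω} (hω : 0 < p ω) : pr p X (X ω) = pr p Y (Y ω) := by
    refine mul_right_cancel₀ (pr_pos hp.1 Z hω).ne' ?_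
    calc pr p X (X ω) * pr p Z (Z ω)
        = pr p (fun ω => (X ω, Z ω)) (X ω, Z ω) :=
          (pr_prodMk_eq_mul_of_ent_eq_add hp hXZ _ _).symm
      _ = pr p (fun ω => (X ω, Y ω, Z ω)) (X ω, Y ω, Z ω) :=
          (pr_eq_pr_of_ent_eq hp.1 (by simp +contextual) hY hω).symm
      _ = pr p (fun ω => (Y ω, Z ω)) (Y ω, Z ω) :=
          pr_eq_pr_of_ent_eq hp.1 (by simp +contextual) hX hω
      _ = pr p Y (Y ω) * pr p Z (Z ω) := pr_prodMk_eq_mul_of_ent_eq_add hp hYZ _ _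
  obtain ⟨ω₀, hω₀⟩ := exists_pos_of_mem_stdSimplex hp
  refine exists_isUniform_of_pr_eq hp (c := pr p Y (Y ω₀)) fun s hs => ?_
  have pair_pos : 0 < pr p (fun ω => (X ω, Y ω)) (s, Y ω₀) := by
    rw [pr_prodMk_eq_mul_of_ent_eq_add hp hXY]
    exact mul_pos hs (pr_pos hp.1 Y hω₀)
  obtain ⟨ω, hω, hval⟩ := exists_pos_of_pr_pos pair_pos
  obtain ⟨rfl, hY₀⟩ := Prod.mk.inj hval
  rw [pr_eq hω, hY₀]

lemma IsUniform.exists_partition [Finite S] [Finite T] {X : Ω → S} {k : ℕ}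
    (hX : IsUniform p X k) (hp : p ∈ stdSimplex ℝ Ω) {Y : Ω → T}
    (hent : ent p (fun ω => (X ω, Y ω)) = ent p X) :
    ∃ (t : ℕ) (α : Fin t → ℕ), (∀ i, 0 < α i) ∧ ∑ i, α i = k ∧
      ent p Y = -∑ i, ((α i : ℝ) / k) * Real.logb 2 ((α i : ℝ) / k) := by
  cases nonempty_fintype T
  obtain ⟨β, hβ⟩ := hX.exists_pr_eq_div hp.1 hent
  obtain ⟨t, α, α_pos, sum_α⟩ := exists_fin_pos_sum_eq (M := ℝ) β
  refine ⟨t, α, α_pos, ?_, ?_⟩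
  · have hk : (k : ℝ) ≠ 0 := Nat.cast_ne_zero.2 (hX.pos hp).ne'
    have sum_div : (∑ i, (α i : ℝ)) / k = 1 := by
      rw [sum_α (fun n => (n : ℝ)) Nat.cast_zero, Finset.sum_div]
      simp only [← hβ, sum_pr, hp.2]
    exact_mod_cast (div_eq_one_iff_eq hk).1 sum_div
  · rw [sum_α (fun n => (n : ℝ) / k * Real.logb 2 ((n : ℝ) / k)) (by simp), ent_eq_neg_sum_univ]
    simp only [hβ]

end Uniform

section UniformWeight

variable {Ω Ω' S T : Type} [Fintype Ω] [Fintype Ω'] [DecidableEq S] [DecidableEq T]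

/-- The probability mass function of the uniform distribution on `Ω`. -/
noncomputable def uniformWeight (Ω : Type) [Fintype Ω] : Ω → ℝ := fun _ => (Fintype.card Ω : ℝ)⁻¹

lemma uniformWeight_mem_stdSimplex [Nonempty Ω] : uniformWeight Ω ∈ stdSimplex ℝ Ω :=
  ⟨fun _ => inv_nonneg.2 (Nat.cast_nonneg _), by simp [uniformWeight]⟩

lemma pr_uniformWeight (X : Ω → S) (s : S) :
    pr (uniformWeight Ω) X s = (#{ω | X ω = s} : ℝ) / Fintype.card Ω := by
  rw [pr, ← sum_filter]
  simp only [uniformWeight, sum_const, nsmul_eq_mul, div_eq_mul_inv]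

lemma ent_uniformWeight_of_injective [Nonempty Ω] {X : Ω → S} (hX : Function.Injective X) :
    ent (uniformWeight Ω) X = Real.logb 2 (Fintype.card Ω) := by
  refine IsUniform.ent_eq (fun s hs => ?_) uniformWeight_mem_stdSimplex
  obtain ⟨ω, -, rfl⟩ := exists_pos_of_pr_pos hs
  have fiber_eq : ({ω' | X ω' = X ω} : Finset Ω) = {ω} := by
    ext
    simp only [mem_filter_univ, mem_singleton, hX.eq_iff]
  rw [pr_uniformWeight, fiber_eq, card_singleton, Nat.cast_one, one_div]

lemma ent_uniformWeight_comp_equiv (e : Ω ≃ Ω') (X : Ω' → S) :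
    ent (uniformWeight Ω) (fun ω => X (e ω)) = ent (uniformWeight Ω') X := by
  have pr_eq (s : S) : pr (uniformWeight Ω) (fun ω => X (e ω)) s = pr (uniformWeight Ω') X s := by
    simp only [pr, uniformWeight, Fintype.card_congr e]
    exact e.sum_comp fun ω => if X ω = s then (Fintype.card Ω' : ℝ)⁻¹ else 0
  simp only [ent_eq_neg_sum, pr_eq, uniformWeight, Fintype.card_congr e]
  exact congrArg Neg.neg
    (e.sum_comp fun ω => (Fintype.card Ω' : ℝ)⁻¹ * Real.logb 2 (pr _ X (X ω)))

lemma ent_uniformWeight_prod [Nonempty Ω] [Nonempty Ω'] (X : Ω → S) (Y : Ω' → T) :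
    ent (uniformWeight (Ω × Ω')) (fun z => (X z.1, Y z.2)) =
      ent (uniformWeight Ω) X + ent (uniformWeight Ω') Y := by
  rw [← ent_prod uniformWeight_mem_stdSimplex uniformWeight_mem_stdSimplex X Y]
  congr
  funext z
  simp only [uniformWeight, Fintype.card_prod, Nat.cast_mul, mul_inv]

lemma ent_uniformWeight_fst [Nonempty Ω] [Nonempty Ω'] (X : Ω → S) :
    ent (uniformWeight (Ω × Ω')) (fun z => X z.1) = ent (uniformWeight Ω) X := by
  rw [← add_zero (ent _ X),
    ← ent_const (uniformWeight_mem_stdSimplex (Ω := Ω')).2 (), ← ent_uniformWeight_prod]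
  exact ent_congr _ fun _ _ => by simp only [Prod.mk.injEq, and_true]

lemma ent_uniformWeight_snd [Nonempty Ω] [Nonempty Ω'] (Y : Ω' → S) :
    ent (uniformWeight (Ω × Ω')) (fun z => Y z.2) = ent (uniformWeight Ω') Y := by
  rw [← ent_uniformWeight_fst (Ω' := Ω) Y, ← ent_uniformWeight_comp_equiv (Equiv.prodComm Ω Ω')]
  rfl

lemma ent_uniformWeight_shear {G : Type} [AddGroup G] [Fintype G] (X : G × G → S) :
    ent (uniformWeight (G × G)) (fun z => X (z.1, z.1 - z.2)) = ent (uniformWeight (G × G)) X :=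
  ent_uniformWeight_comp_equiv (Equiv.prodShear (Equiv.refl G) Equiv.subLeft) X

end UniformWeight

section RandomVector

variable {Ω ι : Type} [Fintype Ω] {S : ι → Type} [∀ i, DecidableEq (S i)]

lemma ent_restrict_empty {p : Ω → ℝ} (hp : ∑ ω, p ω = 1) (X : ∀ i, Ω → S i) :
    ent p (fun ω (l : (∅ : Finset ι)) => X l ω) = 0 :=
  (ent_congr p fun _ _ => by simp [funext_iff]).trans (ent_const hp ())

lemma ent_restrict_singleton (p : Ω → ℝ) (X : ∀ i, Ω → S i) (i : ι) :
    ent p (fun ω (l : ({i} : Finset ι)) => X l ω) = ent p (X i) :=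
  ent_congr p fun ω ω' => by simp [funext_iff]

lemma ent_restrict_pair [DecidableEq ι] (p : Ω → ℝ) (X : ∀ i, Ω → S i) (i j : ι) :
    ent p (fun ω (l : ({i, j} : Finset ι)) => X l ω) = ent p fun ω => (X i ω, X j ω) :=
  ent_congr p fun ω ω' => by simp [funext_iff]

lemma ent_restrict_triple [DecidableEq ι] (p : Ω → ℝ) (X : ∀ i, Ω → S i) (i j k : ι) :
    ent p (fun ω (l : ({i, j, k} : Finset ι)) => X l ω) =
      ent p fun ω => (X i ω, X j ω, X k ω) :=
  ent_congr p fun ω ω' => by simp [funext_iff]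

lemma isEntropic_ent {n : ℕ} {S : Fin n → Type} [∀ i, DecidableEq (S i)] [∀ i, Finite (S i)]
    {p : Ω → ℝ} (hp : p ∈ stdSimplex ℝ Ω) (X : ∀ i, Ω → S i) :
    IsEntropic n fun A => ent p fun ω (i : A) => X i ω := by
  refine ⟨fun i => Nat.card (S i), pr p fun ω i => Finite.equivFin (S i) (X i ω),
    pr_nonneg hp.1 _, by rw [sum_pr, hp.2], fun A => ?_⟩
  rw [ent_pr]
  exact ent_congr p fun ω ω' => by simp [funext_iff]

end RandomVector

section Face

/-- The point `a · r₁ + b · r₂` of the face spanned by the rank functions `r₁` of `W¹²₂` and `r₂` of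
`U¹³⁴₂,₃`. -/
noncomputable def facePoint (a b : ℝ) (A : Finset (Fin 4)) : ℝ := a * rW12 A + b * rkU 2 {0, 2, 3} A

lemma two_le_card_inter_or_mem (A : Finset (Fin 4)) :
    2 ≤ #(A ∩ {0, 2, 3}) ∨
      A ∈ ({∅, {0}, {1}, {2}, {3}, {0, 1}, {1, 2}, {1, 3}} : Finset (Finset (Fin 4))) := by
  revert A
  decide

lemma mem_and_mem_of_two_le_card_inter {A : Finset (Fin 4)} (hA : 2 ≤ #(A ∩ {0, 2, 3})) :
    0 ∈ A ∧ 2 ∈ A ∨ 0 ∈ A ∧ 3 ∈ A ∨ 2 ∈ A ∧ 3 ∈ A := by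
  revert A
  decide

lemma rW12_eq_two {A : Finset (Fin 4)} (hA : 2 ≤ #(A ∩ {0, 2, 3})) : rW12 A = 2 := by
  have nonempty_of_mem (h : 0 ∈ A) : (A ∩ {0, 1}).Nonempty :=
    ⟨0, mem_inter.2 ⟨h, mem_insert_self _ _⟩⟩
  refine min_eq_left ?_
  rcases mem_and_mem_of_two_le_card_inter hA with ⟨h₁, h₂⟩ | ⟨h₁, h₂⟩ | ⟨h₁, h₂⟩
  · rw [if_pos (nonempty_of_mem h₁), if_pos h₂]
    split_ifs <;> norm_num
  · rw [if_pos (nonempty_of_mem h₁), if_pos h₂]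
    split_ifs <;> norm_num
  · rw [if_pos h₁, if_pos h₂]
    split_ifs <;> norm_num

lemma rkU_eq_of_le_card_inter {k : ℕ} {A B : Finset (Fin 4)} (h : k ≤ #(A ∩ B)) : rkU k B A = k :=
  min_eq_left (Nat.cast_le.2 h)

lemma facePoint_of_two_le_card_inter (a b : ℝ) {A : Finset (Fin 4)} (hA : 2 ≤ #(A ∩ {0, 2, 3})) :
    facePoint a b A = (a + b) + (a + b) := by
  rw [facePoint, rW12_eq_two hA, rkU_eq_of_le_card_inter hA]
  push_cast
  ring

lemma facePoint_empty (a b : ℝ) : facePoint a b ∅ = 0 := by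
  simp [facePoint, rW12, rkU]

lemma facePoint_singleton (a b : ℝ) (i : Fin 4) :
    facePoint a b {i} = if i = 1 then a else a + b := by
  fin_cases i <;> simp [facePoint, rW12, rkU]

lemma facePoint_zero_one (a b : ℝ) : facePoint a b {0, 1} = a + b := by
  simp [facePoint, rW12, rkU]

lemma facePoint_one_two (a b : ℝ) : facePoint a b {1, 2} = a + (a + b) := by
  have hW : rW12 {1, 2} = 2 := by simp [rW12, one_add_one_eq_two]
  have hU : rkU 2 {0, 2, 3} {1, 2} = 1 := by simp [rkU]
  rw [facePoint, hW, hU]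
  ring

lemma facePoint_one_three (a b : ℝ) : facePoint a b {1, 3} = a + (a + b) := by
  have hW : rW12 {1, 3} = 2 := by simp [rW12, one_add_one_eq_two]
  have hU : rkU 2 {0, 2, 3} {1, 3} = 1 := by simp [rkU]
  rw [facePoint, hW, hU]
  ring

lemma exists_partition_of_isEntropic {a b : ℝ} (h : IsEntropic 4 (facePoint a b)) :
    ∃ (k t : ℕ) (α : Fin t → ℕ), 0 < k ∧ (∀ i, 0 < α i) ∧ ∑ i, α i = k ∧
      a + b = Real.logb 2 k ∧
      a = -∑ i, ((α i : ℝ) / k) * Real.logb 2 ((α i : ℝ) / k) := by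
  obtain ⟨m, p, hp_nonneg, hp_sum, hent⟩ := h
  have hp : p ∈ stdSimplex ℝ _ := ⟨hp_nonneg, hp_sum⟩
  let X (i : Fin 4) (x : ∀ i, Fin (m i)) : Fin (m i) := x i
  have ent_single (i : Fin 4) : ent p (X i) = if i = 1 then a else a + b := by
    rw [← ent_restrict_singleton, ← hent, facePoint_singleton]
  have ent_zero_one : ent p (fun x => (X 0 x, X 1 x)) = ent p (X 0) := by
    rw [← ent_restrict_pair, ← hent, facePoint_zero_one, ent_single, if_neg (by decide)]
  have ent_pair {i j : Fin 4} (hij : 2 ≤ #({i, j} ∩ {0, 2, 3} : Finset (Fin 4))) :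
      ent p (fun x => (X i x, X j x)) = (a + b) + (a + b) := by
    rw [← ent_restrict_pair, ← hent, facePoint_of_two_le_card_inter a b hij]
  have ent_triple : ent p (fun x => (X 0 x, X 2 x, X 3 x)) = (a + b) + (a + b) := by
    rw [← ent_restrict_triple, ← hent, facePoint_of_two_le_card_inter a b (by decide)]
  have ent_zero : ent p (X 0) = a + b := ent_single 0
  have ent_one : ent p (X 1) = a := ent_single 1
  have ent_two : ent p (X 2) = a + b := ent_single 2
  have ent_three : ent p (X 3) = a + b := ent_single 3
  obtain ⟨k, hk⟩ : ∃ k, IsUniform p (X 0) k :=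
    exists_isUniform_of_pairwise_indep hp (Y := X 2) (Z := X 3)
      (by rw [ent_pair (by decide), ent_zero, ent_two])
      (by rw [ent_pair (by decide), ent_zero, ent_three])
      (by rw [ent_pair (by decide), ent_two, ent_three])
      (by rw [ent_triple, ent_pair (by decide)]) (by rw [ent_triple, ent_pair (by decide)])
  obtain ⟨t, α, α_pos, sum_α, ent_eq⟩ := hk.exists_partition hp ent_zero_one
  exact ⟨k, t, α, hk.pos hp, α_pos, sum_α, ent_zero ▸ hk.ent_eq hp, ent_one ▸ ent_eq⟩

variable {G T : Type} [AddGroup G]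

/-- The random vector `(x, f x, y, x - y)` on the pairs `(x, y)`, the witness that points of the
face are entropic. The sum type serves as common alphabet of the four entries. -/
def shearVector (f : G → T) : Fin 4 → G × G → G ⊕ T :=
  ![fun z => Sum.inl z.1, fun z => Sum.inr (f z.1), fun z => Sum.inl z.2,
    fun z => Sum.inl (z.1 - z.2)]

lemma injective_shearVector_restrict (f : G → T) {A : Finset (Fin 4)}
    (hA : 2 ≤ #(A ∩ {0, 2, 3})) : Function.Injective fun z (i : A) => shearVector f i z := by
  rintro ⟨x, y⟩ ⟨x', y'⟩ h
  have entry_eq {i : Fin 4} (hi : i ∈ A) : shearVector f i (x, y) = shearVector f i (x', y') :=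
    congrFun h ⟨i, hi⟩
  rw [Prod.mk.injEq]
  rcases mem_and_mem_of_two_le_card_inter hA with ⟨h₁, h₂⟩ | ⟨h₁, h₂⟩ | ⟨h₁, h₂⟩
  · exact ⟨Sum.inl.inj (entry_eq h₁), Sum.inl.inj (entry_eq h₂)⟩
  · have hx : x = x' := Sum.inl.inj (entry_eq h₁)
    have hsub : x - y = x' - y' := Sum.inl.inj (entry_eq h₂)
    exact ⟨hx, by rwa [hx, sub_right_inj] at hsub⟩
  · have hy : y = y' := Sum.inl.inj (entry_eq h₁)
    have hsub : x - y = x' - y' := Sum.inl.inj (entry_eq h₂)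
    exact ⟨by rwa [hy, sub_left_inj] at hsub, hy⟩

variable [Fintype G] [DecidableEq G] [DecidableEq T]

lemma ent_shearVector_apply (f : G → T) (i : Fin 4) :
    ent (uniformWeight (G × G)) (shearVector f i) =
      if i = 1 then ent (uniformWeight G) f else Real.logb 2 (Fintype.card G) := by
  have ent_inl : ent (uniformWeight G) (Sum.inl : G → G ⊕ T) = Real.logb 2 (Fintype.card G) :=
    ent_uniformWeight_of_injective Sum.inl_injective
  have ent_zero : ent (uniformWeight (G × G)) (shearVector f 0) = Real.logb 2 (Fintype.card G) :=
    (ent_uniformWeight_fst (Ω' := G) (Sum.inl : G → G ⊕ T)).trans ent_inl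
  have ent_one : ent (uniformWeight (G × G)) (shearVector f 1) = ent (uniformWeight G) f :=
    (ent_uniformWeight_fst (Ω' := G) fun x => (Sum.inr (f x) : G ⊕ T)).trans
      (ent_comp_of_injective Sum.inr_injective _ f)
  have ent_two : ent (uniformWeight (G × G)) (shearVector f 2) = Real.logb 2 (Fintype.card G) :=
    (ent_uniformWeight_snd (Ω := G) (Sum.inl : G → G ⊕ T)).trans ent_inl
  have ent_three : ent (uniformWeight (G × G)) (shearVector f 3) = Real.logb 2 (Fintype.card G) :=
    (ent_uniformWeight_shear fun z => (Sum.inl z.2 : G ⊕ T)).trans ent_two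
  match i with
  | 0 => rwa [if_neg (by decide)]
  | 1 => rwa [if_pos rfl]
  | 2 => rwa [if_neg (by decide)]
  | 3 => rwa [if_neg (by decide)]

lemma ent_shearVector_zero_one (f : G → T) :
    ent (uniformWeight (G × G)) (fun z => (shearVector f 0 z, shearVector f 1 z)) =
      Real.logb 2 (Fintype.card G) :=
  (ent_uniformWeight_fst (Ω' := G) fun x => ((Sum.inl x, Sum.inr (f x)) : (G ⊕ T) × (G ⊕ T))).trans
    (ent_uniformWeight_of_injective fun _ _ h => Sum.inl.inj (congrArg Prod.fst h))

lemma ent_shearVector_one_two (f : G → T) :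
    ent (uniformWeight (G × G)) (fun z => (shearVector f 1 z, shearVector f 2 z)) =
      ent (uniformWeight G) f + Real.logb 2 (Fintype.card G) := by
  rw [← ent_uniformWeight_of_injective (Sum.inl_injective (α := G) (β := T)),
    ← ent_comp_of_injective (Sum.inr_injective (α := G)) _ f]
  exact ent_uniformWeight_prod (fun x => (Sum.inr (f x) : G ⊕ T)) (Sum.inl : G → G ⊕ T)

lemma ent_shearVector_one_three (f : G → T) :
    ent (uniformWeight (G × G)) (fun z => (shearVector f 1 z, shearVector f 3 z)) =
      ent (uniformWeight G) f + Real.logb 2 (Fintype.card G) :=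
  (ent_uniformWeight_shear fun z => ((Sum.inr (f z.1), Sum.inl z.2) : (G ⊕ T) × (G ⊕ T))).trans
    (ent_shearVector_one_two f)

lemma ent_shearVector_restrict (f : G → T) (A : Finset (Fin 4)) :
    ent (uniformWeight (G × G)) (fun z (i : A) => shearVector f i z) =
      facePoint (ent (uniformWeight G) f)
        (Real.logb 2 (Fintype.card G) - ent (uniformWeight G) f) A := by
  rcases two_le_card_inter_or_mem A with hA | hA
  · have card_ne_zero : (Fintype.card G : ℝ) ≠ 0 := Nat.cast_ne_zero.2 Fintype.card_ne_zero
    rw [ent_uniformWeight_of_injective (injective_shearVector_restrict f hA),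
      facePoint_of_two_le_card_inter _ _ hA, Fintype.card_prod, Nat.cast_mul,
      Real.logb_mul card_ne_zero card_ne_zero, add_sub_cancel]
  simp only [mem_insert, mem_singleton] at hA
  rcases hA with rfl | rfl | rfl | rfl | rfl | rfl | rfl | rfl
  · rw [ent_restrict_empty (S := fun _ => G ⊕ T) uniformWeight_mem_stdSimplex.2 (shearVector f),
      facePoint_empty]
  iterate 4 rw [ent_restrict_singleton (S := fun _ => G ⊕ T) _ (shearVector f),
    ent_shearVector_apply, facePoint_singleton, add_sub_cancel]
  · rw [ent_restrict_pair (S := fun _ => G ⊕ T) _ (shearVector f), ent_shearVector_zero_one,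
      facePoint_zero_one, add_sub_cancel]
  · rw [ent_restrict_pair (S := fun _ => G ⊕ T) _ (shearVector f), ent_shearVector_one_two,
      facePoint_one_two, add_sub_cancel]
  · rw [ent_restrict_pair (S := fun _ => G ⊕ T) _ (shearVector f), ent_shearVector_one_three,
      facePoint_one_three, add_sub_cancel]

omit [DecidableEq G] in
lemma isEntropic_facePoint [Finite T] (f : G → T) :
    IsEntropic 4 (facePoint (ent (uniformWeight G) f)
      (Real.logb 2 (Fintype.card G) - ent (uniformWeight G) f)) := by
  classical
  simpa only [ent_shearVector_restrict] using
    isEntropic_ent uniformWeight_mem_stdSimplex (S := fun _ => G ⊕ T) (shearVector f)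

end Face

/-- Theorem 6: for the face (W^{12}₂, U^{134}_{2,3}), h = a·r₁ + b·r₂
(a, b ≥ 0) is entropic iff a + b = log₂ k and a = H(α₁/k, …, α_t/k) for some
positive integer k and some partition (α₁,…,α_t) of k into positive integers. -/
theorem face_W12_U134_23 (a b : ℝ) (ha : 0 ≤ a) (hb : 0 ≤ b) :
    IsEntropic 4
      (fun A => a * rW12 A + b * rkU 2 ({0,2,3} : Finset (Fin 4)) A)
    ↔ ∃ (k t : ℕ) (α : Fin t → ℕ), 0 < k ∧ (∀ i, 0 < α i) ∧ (∑ i, α i) = k ∧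
        a + b = Real.logb 2 k ∧
        a = -∑ i, ((α i : ℝ) / k) * Real.logb 2 ((α i : ℝ) / k) := by
  refine ⟨exists_partition_of_isEntropic, ?_⟩
  rintro ⟨k, t, α, hk, -, rfl, hab, ha_eq⟩
  have : NeZero (∑ i, α i) := ⟨hk.ne'⟩
  obtain ⟨f, card_fiber⟩ := exists_card_fiber_eq α
  have ent_f : ent (uniformWeight (Fin (∑ i, α i))) f = a := by
    simp only [ent_eq_neg_sum_univ, pr_uniformWeight, card_fiber, Fintype.card_fin, ha_eq]
  have h := isEntropic_facePoint f
  rwa [ent_f, Fintype.card_fin, ← hab, add_sub_cancel_left] at h
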